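/- There exist a group G and an infinite set X with a sharply 3-transitive action of G on X such that for every x ∈ X the point stabilizer of x in G has no nontrivial abelian normal subgroup. -/

import Mathlib

/-- An action is sharply 3-transitive if any triple of pairwise distinct points is taken
to any other such triple by a unique group element. -/
def SharplyThreeTransitive (G X : Type*) [Group G] [MulAction G X] : Prop :=
  ∀ x y z x' y' z' : X, x ≠ y → x ≠ z → y ≠ z → x' ≠ y' → x' ≠ z' → y' ≠ z' →
    ∃! g : G, g • x = x' ∧ g • y = y' ∧ g • z = z'

/-- A group `G` acting sharply 3-transitively on an infinite set `X` such that
all point stabilizers have no nontrivial abelian normal subgroup. -/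
structure SharplyThreeTransitiveNoAbelianWitness where
  G : Type*
  [grp : Group G]
  X : Type*
  [act : MulAction G X]
  infinite : Infinite X
  sharply3transitive : SharplyThreeTransitive G X
  stabilizer_no_abelian_normal : ∀ x : X,
    ∀ N : Subgroup ↥(MulAction.stabilizer G x), N.Normal →
      (∀ a b : ↥N, a * b = b * a) → N = ⊥

/-!
Start with `Perm (Fin 3)` acting on `Fin 3` together with infinitely many copies of the regular
action, and repeatedly adjoin a stable letter: a permutation `t` that takes a given triple `a`, not
in the orbit of the base triple `b`, to `b`, and that intertwines the ways in which the group
permutes `a` and `b`. The graph of `t` is built by back-and-forth, every new point being sent to an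
orbit that is both regular and unused. A walk can leave such an orbit only along the edges by which
it entered, so the only reduced closed walks are those along the base edges `a i ↦ b i`. An element
of the extended group is conjugate either to an element of the old group or to a cyclically reduced
word in `t`, and such a word leaves no triple invariant. So an element that fixes a triple
pointwise, or permutes it and fixes a further point, is still trivial, and the union of a tower of
extensions is sharply 3-transitive.

The stabilizer of a point acts 2-transitively, hence primitively, on the remaining points, so an
abelian normal subgroup `N ≠ 1` of it acts regularly there. If `s` is an involution in the
stabilizer and `m ∈ N` takes some `z` to `s z`, then `s` inverts `m`, so `s m` squares to `1` and
has two fixed points, which forces `s = m⁻¹ ∈ N`. The involutions in a stabilizer would therefore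
commute, but the first stable letter conjugates an involution to one that fixes the same point and
does not commute with it.
-/

open Equiv Function MulAction

section AbelianNormal

variable {H H' Z : Type*} [Group H] [Group H'] [MulAction H Z]

/-- The group `H` has no nontrivial abelian normal subgroup. -/
def HasNoAbelianNormal (H : Type*) [Group H] : Prop :=
  ∀ N : Subgroup H, N.Normal → (∀ a b : N, a * b = b * a) → N = ⊥

lemma HasNoAbelianNormal.congr (e : H ≃* H') (h : HasNoAbelianNormal H) :
    HasNoAbelianNormal H' := by
  intro N hN hcomm
  have hbot : N.comap e.toMonoidHom = ⊥ :=
    h _ (hN.comap _) fun a b => Subtype.ext <| e.injective <| by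
      simpa only [Subgroup.coe_mul, map_mul] using
        congrArg Subtype.val (hcomm ⟨e a, a.2⟩ ⟨e b, b.2⟩)
  rw [← Subgroup.map_comap_eq_self_of_surjective (f := e.toMonoidHom) e.surjective N, hbot,
    Subgroup.map_bot]

lemma eq_of_smul_eq_of_commute [FaithfulSMul H Z] {N : Subgroup H} [IsPretransitive N Z]
    (hN : ∀ a b : N, a * b = b * a) {m n : N} {z : Z} (h : m • z = n • z) : m = n := by
  refine eq_of_smul_eq_smul (α := Z) fun w => ?_
  obtain ⟨k, rfl⟩ := exists_smul_eq N z w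
  rw [← mul_smul, hN, mul_smul, h, ← mul_smul, hN, mul_smul]

lemma mem_of_mul_self_eq_one_of_commute [FaithfulSMul H Z] [Nonempty Z] {N : Subgroup H}
    [hn : N.Normal] [IsPretransitive N Z] (hN : ∀ a b : N, a * b = b * a)
    (hfree : ∀ g : H, g * g = 1 → ∀ z : Z, g • z = z → g = 1) {s : H} (hs : s * s = 1) :
    s ∈ N := by
  obtain ⟨z⟩ := ‹Nonempty Z›
  obtain ⟨⟨m, hm⟩, hmz : m • z = s • z⟩ := exists_smul_eq N z (s • z)
  have hs' : s⁻¹ = s := inv_eq_of_mul_eq_one_left hs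
  have hconj : s * m * s = m⁻¹ := by
    have hmem : s * m * s ∈ N := by simpa [hs'] using hn.conj_mem m hm s
    have h : (⟨s * m * s, hmem⟩ : N) = ⟨m⁻¹, N.inv_mem hm⟩ := by
      refine eq_of_smul_eq_of_commute hN (z := m • z) ?_
      simp only [Subgroup.mk_smul, inv_smul_smul]
      rw [hmz, ← mul_smul, mul_assoc, hs, mul_one, mul_smul, hmz, ← mul_smul, hs, one_smul]
    exact congrArg Subtype.val h
  have hfix : (s * m) • z = z := by rw [mul_smul, hmz, ← mul_smul, hs, one_smul]
  have hsm : s * m = 1 := by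
    refine hfree _ ?_ z hfix
    rw [← mul_assoc, hconj, inv_mul_cancel]
  rw [← hs', inv_eq_of_mul_eq_one_right hsm]
  exact hm

theorem hasNoAbelianNormal_of_isQuasiPreprimitive [FaithfulSMul H Z] [IsQuasiPreprimitive H Z]
    (hfree : ∀ g : H, g * g = 1 → ∀ z : Z, g • z = z → g = 1) {s s' : H} (hs : s * s = 1)
    (hs' : s' * s' = 1) (hne : s * s' ≠ s' * s) : HasNoAbelianNormal H := by
  intro N hn hN
  by_contra hbot
  obtain ⟨m, hm⟩ := Subgroup.ne_bot_iff_exists_ne_one.1 hbot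
  obtain ⟨z, hz⟩ : ∃ z : Z, m • z ≠ z := by
    by_contra! h
    exact hm (eq_of_smul_eq_smul (α := Z) fun z => by rw [h z, one_smul])
  have : Nonempty Z := ⟨z⟩
  have : IsPretransitive N Z := IsQuasiPreprimitive.isPretransitive_of_normal fun h =>
    hz ((h ▸ Set.mem_univ z : z ∈ fixedPoints N Z) m)
  have hmem {r : H} (hr : r * r = 1) : r ∈ N := mem_of_mul_self_eq_one_of_commute hN hfree hr
  exact hne (congrArg Subtype.val (hN ⟨s, hmem hs⟩ ⟨s', hmem hs'⟩))

end AbelianNormal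

section ThreeTransitive

variable {G X : Type*} [Group G] [MulAction G X]

theorem hasNoAbelianNormal_stabilizer [IsMultiplyPretransitive G X 3] [IsPretransitive G X]
    [FaithfulSMul G X]
    (hfree : ∀ g : G, g * g = 1 → ∀ x y : X, x ≠ y → g • x = x → g • y = y → g = 1)
    {x₀ : X} {s s' : G} (hsx : s • x₀ = x₀) (hsx' : s' • x₀ = x₀) (hs : s * s = 1)
    (hs' : s' * s' = 1) (hne : s * s' ≠ s' * s) (x : X) : HasNoAbelianNormal (stabilizer G x) := by
  obtain ⟨g, hg⟩ := exists_smul_eq G x₀ x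
  have : FaithfulSMul (stabilizer G x₀) (SubMulAction.ofStabilizer G x₀) := by
    refine ⟨fun {p q} h => Subtype.ext <| eq_of_smul_eq_smul (α := X) fun y => ?_⟩
    by_cases hy : y = x₀
    · rw [hy, p.2, q.2]
    · exact congrArg Subtype.val (h ⟨y, hy⟩)
  have : IsPreprimitive (stabilizer G x₀) (SubMulAction.ofStabilizer G x₀) :=
    isPreprimitive_of_is_two_pretransitive <|
      SubMulAction.ofStabilizer.isMultiplyPretransitive.1 ‹IsMultiplyPretransitive G X 3›
  refine (hasNoAbelianNormal_of_isQuasiPreprimitive (Z := SubMulAction.ofStabilizer G x₀)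
    (s := ⟨s, hsx⟩) (s' := ⟨s', hsx'⟩) (fun p hp y hy => ?_) (Subtype.ext hs) (Subtype.ext hs')
    fun h => hne (congrArg Subtype.val h)).congr (stabilizerEquivStabilizer hg.symm)
  exact Subtype.ext <| hfree p (congrArg Subtype.val hp) y x₀ y.2 (congrArg Subtype.val hy) p.2

lemma exists_embedding_fin_three {x y z : X} (hxy : x ≠ y) (hxz : x ≠ z) (hyz : y ≠ z) :
    ∃ a : Fin 3 ↪ X, a 0 = x ∧ a 1 = y ∧ a 2 = z := by
  refine ⟨⟨![x, y, z], fun i j h => ?_⟩, rfl, rfl, rfl⟩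
  fin_cases i <;> fin_cases j <;> simp_all

theorem sharplyThreeTransitive_of_isMultiplyPretransitive [IsMultiplyPretransitive G X 3]
    (h : ∀ g : G, ∀ a : Fin 3 ↪ X, (∀ i, g • a i = a i) → g = 1) :
    SharplyThreeTransitive G X := by
  intro x y z x' y' z' hxy hxz hyz hxy' hxz' hyz'
  obtain ⟨a, rfl, rfl, rfl⟩ := exists_embedding_fin_three hxy hxz hyz
  obtain ⟨b, rfl, rfl, rfl⟩ := exists_embedding_fin_three hxy' hxz' hyz'
  obtain ⟨g, rfl⟩ := exists_smul_eq G a b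
  refine ⟨g, ⟨rfl, rfl, rfl⟩, fun g' ⟨h0, h1, h2⟩ => (inv_mul_eq_one.1 <| h _ a ?_).symm⟩
  intro i
  rw [mul_smul, inv_smul_eq_iff]
  fin_cases i
  exacts [h0, h1, h2]

lemma SharplyThreeTransitive.ulift (h : SharplyThreeTransitive G X) :
    SharplyThreeTransitive (ULift G) (ULift X) := by
  intro x y z x' y' z' hxy hxz hyz hxy' hxz' hyz'
  simp only [← ULift.down_inj, ne_eq] at *
  obtain ⟨g, hg, huniq⟩ := h _ _ _ _ _ _ hxy hxz hyz hxy' hxz' hyz'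
  exact ⟨⟨g⟩, hg, fun g' hg' => ULift.down_injective (huniq _ hg')⟩

/-- Point stabilizers do not change when group and space are lifted to a higher universe. -/
def stabilizerULiftEquiv (x : ULift X) : stabilizer G x.down ≃* stabilizer (ULift G) x where
  toFun g := ⟨⟨g⟩, ULift.down_injective g.2⟩
  invFun g := ⟨g.1.down, congrArg ULift.down g.2⟩
  map_mul' _ _ := rfl

end ThreeTransitive

section FreeOffTuples

variable {X ι : Type*}

variable (ι) in
/-- Off the families indexed by `ι`, the permutation group `G` acts freely: an element fixing an
`ι`-tuple of distinct points is trivial, and an element that permutes the entries of such a tuple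
has no fixed point outside of it. -/
structure FreeOffTuples (G : Subgroup (Perm X)) : Prop where
  eq_one_of_fixes : ∀ g ∈ G, ∀ a : ι ↪ X, (∀ i, g (a i) = a i) → g = 1
  eq_one_of_permutes : ∀ g ∈ G, ∀ (a : ι ↪ X) (σ : Perm ι), (∀ i, g (a i) = a (σ i)) →
    ∀ x ∉ Set.range a, g x = x → g = 1

variable {G : Subgroup (Perm X)}

lemma FreeOffTuples.eq_one_of_mul_self_eq_one (hG : FreeOffTuples (Fin 3) G) {g : Perm X}
    (hg : g ∈ G) (hgg : g * g = 1) {x y : X} (hxy : x ≠ y) (hx : g x = x) (hy : g y = y) :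
    g = 1 := by
  by_contra h1
  obtain ⟨p, hp⟩ : ∃ p, g p ≠ p := by
    by_contra! h
    exact h1 (Equiv.ext h)
  have hgp : g (g p) = p := congrArg (· p) hgg
  have hxp : x ≠ p := fun h => hp (h ▸ hx)
  have hxgp : x ≠ g p := fun h => hxp (g.injective (hx.trans h))
  have hyp : p ≠ y := fun h => hp (h ▸ hy)
  have hygp : g p ≠ y := fun h => hyp (g.injective (h.trans hy.symm))
  obtain ⟨a, ha0, ha1, ha2⟩ := exists_embedding_fin_three hxp hxgp hp.symm
  refine h1 (hG.eq_one_of_permutes g hg a (swap 1 2) ?_ y ?_ hy)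
  · simp only [Fin.forall_fin_succ]
    simp [ha0, ha1, ha2, hx, hgp, swap_apply_of_ne_of_ne]
  · simp [Fin.exists_fin_succ, ha0, ha1, ha2, hxy, hyp, hygp]

end FreeOffTuples

section StabPairs

variable {X ι : Type*} {G : Subgroup (Perm X)} {a b : ι ↪ X} {c c' d d' : Perm X}

/-- The pairs `(c, d)` of elements of `G` such that `c` permutes the family `a` and `d` permutes the
family `b` in the same way. These are the pairs for which a stable letter `t` taking `a` to `b`
has to satisfy `t * c = d * t`, i.e. the graph of the isomorphism of associated subgroups. -/
def stabPairs (G : Subgroup (Perm X)) (a b : ι ↪ X) : Subgroup (Perm X × Perm X) where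
  carrier := {p | p.1 ∈ G ∧ p.2 ∈ G ∧
    ∃ σ : Perm ι, (∀ i, p.1 (a i) = a (σ i)) ∧ ∀ i, p.2 (b i) = b (σ i)}
  one_mem' := ⟨G.one_mem, G.one_mem, 1, fun _ => rfl, fun _ => rfl⟩
  mul_mem' := by
    rintro p q ⟨hp1, hp2, σ, hσ, hσ'⟩ ⟨hq1, hq2, τ, hτ, hτ'⟩
    exact ⟨G.mul_mem hp1 hq1, G.mul_mem hp2 hq2, σ * τ, fun i => by simp [hτ, hσ],
      fun i => by simp [hτ', hσ']⟩
  inv_mem' := by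
    rintro p ⟨hp1, hp2, σ, hσ, hσ'⟩
    refine ⟨G.inv_mem hp1, G.inv_mem hp2, σ⁻¹, fun i => ?_, fun i => ?_⟩
    · exact Perm.inv_eq_iff_eq.2 (by simp [hσ])
    · exact Perm.inv_eq_iff_eq.2 (by simp [hσ'])

lemma mem_stabPairs_swap : (d, c) ∈ stabPairs G b a ↔ (c, d) ∈ stabPairs G a b :=
  ⟨fun ⟨hd, hc, σ, hσ, hσ'⟩ => ⟨hc, hd, σ, hσ', hσ⟩,
    fun ⟨hc, hd, σ, hσ, hσ'⟩ => ⟨hd, hc, σ, hσ', hσ⟩⟩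

lemma FreeOffTuples.snd_eq_one (hG : FreeOffTuples ι G) (h : (1, d) ∈ stabPairs G a b) :
    d = 1 := by
  obtain ⟨-, hd, σ, hσ, hσ'⟩ := h
  refine hG.eq_one_of_fixes d hd b fun i => ?_
  rw [hσ', ← a.injective (hσ i)]

lemma FreeOffTuples.fst_eq (hG : FreeOffTuples ι G) (h : (c, d) ∈ stabPairs G a b)
    (h' : (c', d) ∈ stabPairs G a b) : c = c' := by
  have hmem : (c⁻¹ * c', d⁻¹ * d) ∈ stabPairs G a b := mul_mem (inv_mem h) h'
  rw [inv_mul_cancel] at hmem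
  exact inv_mul_eq_one.1 (hG.snd_eq_one (mem_stabPairs_swap.2 hmem))

lemma FreeOffTuples.snd_eq_of_apply_eq (hG : FreeOffTuples ι G) (h : (c, d) ∈ stabPairs G a b)
    (h' : (c', d') ∈ stabPairs G a b) {x : X} (hx : x ∉ Set.range a) (hcx : c x = c' x) :
    d = d' := by
  have hmem : (c⁻¹ * c', d⁻¹ * d') ∈ stabPairs G a b := mul_mem (inv_mem h) h'
  have hfix : (c⁻¹ * c') x = x := by simp [← hcx]
  obtain ⟨hc, -, σ, hσ, -⟩ := id hmem
  have hone : c⁻¹ * c' = 1 := hG.eq_one_of_permutes _ hc a σ hσ x hx hfix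
  exact inv_mul_eq_one.1 (hG.snd_eq_one (hone ▸ hmem))

end StabPairs

section Walk

variable {X ι κ : Type*} {G : Subgroup (Perm X)} {a b : ι ↪ X} {R : X → X → Prop}
  {next : Perm κ} {l : κ → Bool × Perm X} {p : κ → X}

/-- The relation `R` if `e = true` and its converse if `e = false`. -/
def Oriented (e : Bool) (R : X → X → Prop) (x y : X) : Prop :=
  if e then R x y else R y x

lemma Oriented.mono {e : Bool} {R' : X → X → Prop} (h : ∀ x y, R x y → R' x y) {x y : X}
    (hR : Oriented e R x y) : Oriented e R' x y := by
  cases e <;> exact h _ _ hR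

lemma oriented_not {e : Bool} {x y : X} :
    Oriented (!e) R x y ↔ Oriented e (flip R) x y := by
  cases e <;> rfl

/-- A pair `(e, g)` encodes the letter `t ^ e * g` of a word in `G` and a stable letter `t`, where
`e = true` stands for `t` and `e = false` for `t⁻¹`. The product `t ^ e * g * (t ^ e' * g')` is a
pinch if `e = !e'` and `t ^ e * g * t ^ e'` lies in `G` by the relations `t * c = d * t`. -/
def IsPinch (G : Subgroup (Perm X)) (a b : ι ↪ X) (l l' : Bool × Perm X) : Prop :=
  l.1 = !l'.1 ∧ ∃ c, Oriented l'.1 (fun c d => (c, d) ∈ stabPairs G a b) c l.2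

/-- A finite disjoint union of closed walks along the edges of `R` and elements of `G`: at the
point `p k` first `(l k).2` acts, and then an edge, oriented by `(l k).1`, is followed to
`p (next k)`. The walks are reduced if the letters used never form a pinch. -/
structure IsReducedWalk (G : Subgroup (Perm X)) (a b : ι ↪ X) (R : X → X → Prop)
    (next : Perm κ) (l : κ → Bool × Perm X) (p : κ → X) : Prop where
  mem : ∀ k, (l k).2 ∈ G
  not_isPinch : ∀ k, ¬IsPinch G a b (l (next k)) (l k)
  edge : ∀ k, Oriented (l k).1 R ((l k).2 (p k)) (p (next k))

lemma isPinch_swap {l l' : Bool × Perm X} :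
    IsPinch G b a (!l.1, l.2) (!l'.1, l'.2) ↔ IsPinch G a b l l' := by
  simp only [IsPinch, oriented_not, Bool.not_inj_iff, flip_def, mem_stabPairs_swap]

lemma IsReducedWalk.swap (h : IsReducedWalk G a b R next l p) :
    IsReducedWalk G b a (flip R) next (fun k => (!(l k).1, (l k).2)) p where
  mem := h.mem
  not_isPinch k := isPinch_swap.not.2 (h.not_isPinch k)
  edge k := oriented_not.2 (h.edge k)

end Walk

section PartialStable

universe v

/-- The graph of the bijection `a i ↦ b i`. -/
def baseRel {X ι : Type*} (a b : ι ↪ X) (x y : X) : Prop :=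
  ∃ i, a i = x ∧ b i = y

/-- A relation `R` that is a candidate for a part of the graph of a stable letter `t`: it is a
partial injection taking `a` to `b`, it satisfies `t * c = d * t` for `(c, d) ∈ stabPairs G a b`, it
preserves labels, and it has no reduced closed walks other than those the base edges
`a i ↦ b i` force on it. -/
structure IsPartialStable {X : Type*} {ι : Type v} (G : Subgroup (Perm X)) (a b : ι ↪ X)
    (lab : X → ℕ) (R : X → X → Prop) : Prop where
  base : ∀ i, R (a i) (b i)
  biUnique : Relator.BiUnique R
  equivariant : ∀ {c d}, (c, d) ∈ stabPairs G a b → ∀ {x y}, R x y → R (c x) (d y)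
  label_eq : ∀ {x y}, R x y → lab x = lab y
  walk : ∀ {κ : Type v} [Finite κ] {next : Perm κ} {l p}, IsReducedWalk G a b R next l p →
    ∀ k, Oriented (l k).1 (baseRel a b) ((l k).2 (p k)) (p (next k))

/-- `x` is a point on which `G` acts freely. -/
def IsRegularPt {X : Type*} (G : Subgroup (Perm X)) (x : X) : Prop :=
  ∀ g ∈ G, g x = x → g = 1

/-- A labelling of the `G`-orbits such that the families `a` and `b` carry label `0`, all points
with other labels are regular, and each label occurs on infinitely many regular orbits. -/
structure IsLabelling {X ι : Type*} (G : Subgroup (Perm X)) (a b : ι ↪ X) (lab : X → ℕ) :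
    Prop where
  map_apply : ∀ g ∈ G, ∀ x, lab (g x) = lab x
  left : ∀ i, lab (a i) = 0
  right : ∀ i, lab (b i) = 0
  regular : ∀ x, lab x ≠ 0 → IsRegularPt G x
  exists_fresh : ∀ n (F : Set X), F.Finite →
    ∃ y, lab y = n ∧ IsRegularPt G y ∧ ∀ g ∈ G, g y ∉ F

variable {X : Type*} {ι : Type v} {G : Subgroup (Perm X)} {a b : ι ↪ X} {lab : X → ℕ}
  {R : X → X → Prop}

lemma IsLabelling.swap (h : IsLabelling G a b lab) : IsLabelling G b a lab :=
  { h with left := h.right, right := h.left }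

lemma isPartialStable_baseRel (h : IsLabelling G a b lab) :
    IsPartialStable G a b lab (baseRel a b) where
  base i := ⟨i, rfl, rfl⟩
  biUnique := by
    refine ⟨?_, ?_⟩
    · rintro _ _ _ ⟨i, rfl, rfl⟩ ⟨j, rfl, hj⟩
      rw [b.injective hj]
    · rintro _ _ _ ⟨i, rfl, rfl⟩ ⟨j, hj, rfl⟩
      rw [a.injective hj]
  equivariant := by
    rintro c d ⟨-, -, σ, hσ, hσ'⟩ _ _ ⟨i, rfl, rfl⟩
    exact ⟨σ i, (hσ i).symm, (hσ' i).symm⟩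
  label_eq := by
    rintro _ _ ⟨i, rfl, rfl⟩
    rw [h.left, h.right]
  walk h k := h.edge k

lemma IsPartialStable.swap (h : IsPartialStable G a b lab R) :
    IsPartialStable G b a lab (flip R) where
  base := h.base
  biUnique := ⟨fun _ _ _ h₁ h₂ => h.biUnique.2 h₁ h₂, fun _ _ _ h₁ h₂ => h.biUnique.1 h₁ h₂⟩
  equivariant hcd _ _ hR := h.equivariant (mem_stabPairs_swap.1 hcd) hR
  label_eq hR := (h.label_eq hR).symm
  walk hw k := by
    have := h.walk hw.swap k
    rw [oriented_not] at this
    exact this.mono fun _ _ ⟨i, hi, hi'⟩ => ⟨i, hi', hi⟩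

section Extend

variable {x y : X}

/-- The relation `R` together with the edges `c x ↦ d y` for `(c, d) ∈ stabPairs G a b`. -/
def extendRel {X ι : Type*} (G : Subgroup (Perm X)) (a b : ι ↪ X) (R : X → X → Prop) (x y u v : X) :
    Prop :=
  R u v ∨ ∃ q ∈ stabPairs G a b, q.1 x = u ∧ q.2 y = v

/-- A point `y` eligible as the image of `x`: it is regular, and its orbit contains neither `x` nor
an endpoint of an edge of `R`. -/
structure IsFresh {X : Type*} (G : Subgroup (Perm X)) (R : X → X → Prop) (x y : X) : Prop where
  regular : IsRegularPt G y
  notMem : x ∉ orbit G y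
  left : ∀ {u v}, R u v → u ∉ orbit G y
  right : ∀ {u v}, R u v → v ∉ orbit G y

lemma apply_mem_orbit_iff {g : Perm X} (hg : g ∈ G) {u : X} : g u ∈ orbit G y ↔ u ∈ orbit G y := by
  rw [← orbit_eq_iff, ← orbit_eq_iff, ← orbit_smul (⟨g, hg⟩ : G) u]
  rfl

lemma IsRegularPt.eq_of_apply_eq (h : IsRegularPt G x) {g g' : Perm X} (hg : g ∈ G) (hg' : g' ∈ G)
    (heq : g x = g' x) : g = g' :=
  inv_mul_eq_one.1 (h _ (G.mul_mem (G.inv_mem hg) hg') (by simp [← heq]))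

lemma IsFresh.left_notMem_orbit (h : IsFresh G R x y) {u v : X}
    (hR : extendRel G a b R x y u v) : u ∉ orbit G y := by
  obtain hR | ⟨q, hq, rfl, -⟩ := hR
  · exact h.left hR
  · exact (apply_mem_orbit_iff hq.1).not.2 h.notMem

lemma IsFresh.right_mem_orbit_iff (h : IsFresh G R x y) {u v : X}
    (hR : extendRel G a b R x y u v) : v ∈ orbit G y ↔ ¬R u v := by
  refine ⟨fun hv hR => h.right hR hv, fun hnot => ?_⟩
  obtain ⟨q, hq, -, rfl⟩ := hR.resolve_left hnot
  exact (apply_mem_orbit_iff hq.2.1).2 (mem_orbit_self y)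

lemma IsFresh.biUnique_extendRel (hG : FreeOffTuples ι G) (h : IsPartialStable G a b lab R)
    (hx : ∀ v, ¬R x v) (hy : IsFresh G R x y) : Relator.BiUnique (extendRel G a b R x y) := by
  constructor
  · intro u u' v hR hR'
    by_cases hv : v ∈ orbit G y
    · obtain ⟨⟨c, d⟩, hq, rfl, hdv⟩ := hR.resolve_left ((hy.right_mem_orbit_iff hR).1 hv)
      obtain ⟨⟨c', d'⟩, hq', rfl, hdv'⟩ := hR'.resolve_left ((hy.right_mem_orbit_iff hR').1 hv)
      obtain rfl : d = d' := hy.regular.eq_of_apply_eq hq.2.1 hq'.2.1 (hdv.trans hdv'.symm)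
      exact congrArg (· x) (hG.fst_eq hq hq')
    · have hold {w} (hw : extendRel G a b R x y w v) : R w v :=
        by_contra fun hnew => hv ((hy.right_mem_orbit_iff hw).2 hnew)
      exact h.biUnique.1 (hold hR) (hold hR')
  · rintro u v v' (hR | ⟨⟨c, d⟩, hq, rfl, rfl⟩) (hR' | ⟨⟨c', d'⟩, hq', hcx, rfl⟩)
    · exact h.biUnique.2 hR hR'
    · exact absurd (h.equivariant (c := c'⁻¹) (inv_mem hq') hR) (by simpa [← hcx] using hx _)
    · exact absurd (h.equivariant (c := c⁻¹) (inv_mem hq) hR') (by simpa using hx _)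
    · exact congrArg (· y) <|
        hG.snd_eq_of_apply_eq hq hq' (by rintro ⟨i, rfl⟩; exact hx _ (h.base i)) hcx.symm

lemma IsFresh.isPinch (hy : IsFresh G R x y) {l l' : Bool × Perm X} (hl : l.2 ∈ G)
    {u v w : X} (hl' : l'.1 = true) (huv : extendRel G a b R x y u v) (hnew : ¬R u v)
    (hvw : Oriented l.1 (extendRel G a b R x y) (l.2 v) w) : IsPinch G a b l l' := by
  have hv : l.2 v ∈ orbit G y :=
    (apply_mem_orbit_iff hl).2 ((hy.right_mem_orbit_iff huv).2 hnew)
  obtain ⟨e, g⟩ := l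
  cases e
  case true => exact absurd hv (hy.left_notMem_orbit hvw)
  obtain ⟨q, hq, -, rfl⟩ := huv.resolve_left hnew
  obtain ⟨q', hq', rfl, hgv⟩ := hvw.resolve_left ((hy.right_mem_orbit_iff hvw).1 hv)
  have hg : q'.2 = g * q.2 := hy.regular.eq_of_apply_eq hq'.2.1 (G.mul_mem hl hq.2.1) hgv
  refine ⟨by rw [hl']; rfl, q'.1 * q.1⁻¹, ?_⟩
  rw [hl', eq_mul_inv_of_mul_eq hg.symm]
  exact mul_mem hq' (inv_mem hq)

-- The `G`-orbit of `y` is reached by new edges only, and by regularity a walk that enters and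
-- leaves it makes a pinch. So a reduced walk cannot use a new edge.
lemma IsFresh.isReducedWalk (hy : IsFresh G R x y) {κ : Type*} {next : Perm κ}
    {l : κ → Bool × Perm X} {p : κ → X}
    (hw : IsReducedWalk G a b (extendRel G a b R x y) next l p) :
    IsReducedWalk G a b R next l p := by
  have hpos k (hk : (l k).1 = true) : R ((l k).2 (p k)) (p (next k)) := by
    by_contra hnew
    have hedge := hw.edge k
    rw [hk] at hedge
    exact hw.not_isPinch k (hy.isPinch (hw.mem _) hk hedge hnew (hw.edge _))
  refine ⟨hw.mem, hw.not_isPinch, fun k => ?_⟩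
  cases hk : (l k).1
  case true => exact hpos k hk
  have hedge := hw.edge k
  rw [hk] at hedge
  by_contra hnew
  have hpk : p k ∈ orbit G y :=
    (apply_mem_orbit_iff (hw.mem k)).1 ((hy.right_mem_orbit_iff hedge).2 hnew)
  obtain ⟨j, rfl⟩ := next.surjective k
  have hprev := hw.edge j
  cases hj : (l j).1 <;> rw [hj] at hprev
  case false => exact hy.left_notMem_orbit hprev hpk
  exact (hy.right_mem_orbit_iff hprev).1 hpk (hpos j hj)

theorem IsPartialStable.extendRel (hG : FreeOffTuples ι G) (hlab : IsLabelling G a b lab)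
    (h : IsPartialStable G a b lab R) (hx : ∀ v, ¬R x v) (hy : IsFresh G R x y)
    (hxy : lab x = lab y) : IsPartialStable G a b lab (extendRel G a b R x y) where
  base i := Or.inl (h.base i)
  biUnique := hy.biUnique_extendRel hG h hx
  equivariant := by
    rintro c d hcd u v (hR | ⟨q, hq, rfl, rfl⟩)
    · exact Or.inl (h.equivariant hcd hR)
    · exact Or.inr ⟨_, mul_mem hcd hq, rfl, rfl⟩
  label_eq := by
    rintro u v (hR | ⟨q, hq, rfl, rfl⟩)
    · exact h.label_eq hR
    · rw [hlab.map_apply _ hq.1, hlab.map_apply _ hq.2.1, hxy]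
  walk hw := h.walk (hy.isReducedWalk hw)

end Extend

section Limit

/-- The edges of `R` have their endpoints in finitely many `G`-orbits. -/
def HasFiniteSupport {X : Type*} (G : Subgroup (Perm X)) (R : X → X → Prop) : Prop :=
  ∃ F : Set X, F.Finite ∧ ∀ {u v}, R u v → (∃ g ∈ G, g u ∈ F) ∧ ∃ g ∈ G, g v ∈ F

lemma HasFiniteSupport.swap (h : HasFiniteSupport G R) : HasFiniteSupport G (flip R) :=
  let ⟨F, hF, hR⟩ := h
  ⟨F, hF, fun h => (hR h).symm⟩

lemma hasFiniteSupport_baseRel [Finite ι] : HasFiniteSupport G (baseRel a b) := by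
  refine ⟨Set.range a ∪ Set.range b, (Set.finite_range a).union (Set.finite_range b), ?_⟩
  rintro _ _ ⟨i, rfl, rfl⟩
  exact ⟨⟨1, G.one_mem, by simp⟩, 1, G.one_mem, by simp⟩

lemma HasFiniteSupport.extendRel (h : HasFiniteSupport G R) (x y : X) :
    HasFiniteSupport G (extendRel G a b R x y) := by
  obtain ⟨F, hF, hR⟩ := h
  refine ⟨insert x (insert y F), (hF.insert y).insert x, ?_⟩
  rintro u v (huv | ⟨⟨c, d⟩, hcd, rfl, rfl⟩)
  · obtain ⟨⟨g, hg, hgu⟩, g', hg', hgv⟩ := hR huv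
    exact ⟨⟨g, hg, by simp [hgu]⟩, g', hg', by simp [hgv]⟩
  · exact ⟨⟨c⁻¹, G.inv_mem hcd.1, by simp⟩, d⁻¹, G.inv_mem hcd.2.1, by simp⟩

lemma HasFiniteSupport.exists_isFresh (h : HasFiniteSupport G R) (hlab : IsLabelling G a b lab)
    (x : X) : ∃ y, lab y = lab x ∧ IsFresh G R x y := by
  obtain ⟨F, hF, hR⟩ := h
  obtain ⟨y, hy, hreg, hfresh⟩ := hlab.exists_fresh (lab x) (insert x F) (hF.insert x)
  have key {u : X} (hu : ∃ g ∈ G, g u ∈ insert x F) : u ∉ orbit G y := by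
    rintro ⟨k, rfl⟩
    obtain ⟨g, hg, hgF⟩ := hu
    exact hfresh (g * k) (G.mul_mem hg k.2) hgF
  refine ⟨y, hy, hreg, key ⟨1, G.one_mem, Or.inl rfl⟩, fun huv => key ?_, fun huv => key ?_⟩
  · exact (hR huv).1.imp fun _ h => ⟨h.1, Or.inr h.2⟩
  · exact (hR huv).2.imp fun _ h => ⟨h.1, Or.inr h.2⟩

lemma IsPartialStable.exists_extension (hG : FreeOffTuples ι G) (hlab : IsLabelling G a b lab)
    (h : IsPartialStable G a b lab R) (hF : HasFiniteSupport G R) (x : X) :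
    ∃ R', (IsPartialStable G a b lab R' ∧ HasFiniteSupport G R') ∧ R ≤ R' ∧ ∃ y, R' x y := by
  by_cases hx : ∃ y, R x y
  · exact ⟨R, ⟨h, hF⟩, le_rfl, hx⟩
  obtain ⟨y, hxy, hy⟩ := hF.exists_isFresh hlab x
  exact ⟨_, ⟨h.extendRel hG hlab (not_exists.1 hx) hy hxy.symm, hF.extendRel x y⟩,
    fun _ _ => Or.inl, y, Or.inr ⟨1, one_mem _, rfl, rfl⟩⟩

lemma IsPartialStable.exists_extension_oriented (hG : FreeOffTuples ι G)
    (hlab : IsLabelling G a b lab) (h : IsPartialStable G a b lab R) (hF : HasFiniteSupport G R)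
    (e : Bool) (x : X) :
    ∃ R', (IsPartialStable G a b lab R' ∧ HasFiniteSupport G R') ∧ R ≤ R' ∧
      ∃ y, Oriented e R' x y := by
  cases e
  case true => exact h.exists_extension hG hlab hF x
  obtain ⟨R', ⟨h', hF'⟩, hle, hy⟩ := h.swap.exists_extension hG hlab.swap hF.swap x
  exact ⟨flip R', ⟨h'.swap, hF'.swap⟩, fun _ _ => hle _ _, hy⟩

lemma IsPartialStable.of_monotone {R : ℕ → X → X → Prop} (hmono : Monotone R)
    (h : ∀ n, IsPartialStable G a b lab (R n)) :
    IsPartialStable G a b lab fun x y => ∃ n, R n x y where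
  base i := ⟨0, (h 0).base i⟩
  biUnique := by
    constructor
    · rintro u u' v ⟨m, hm⟩ ⟨n, hn⟩
      exact (h (max m n)).biUnique.1 (hmono (le_max_left m n) _ _ hm)
        (hmono (le_max_right m n) _ _ hn)
    · rintro u v v' ⟨m, hm⟩ ⟨n, hn⟩
      exact (h (max m n)).biUnique.2 (hmono (le_max_left m n) _ _ hm)
        (hmono (le_max_right m n) _ _ hn)
  equivariant := fun hcd _ _ ⟨n, hn⟩ => ⟨n, (h n).equivariant hcd hn⟩
  label_eq := fun ⟨n, hn⟩ => (h n).label_eq hn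
  walk := by
    intro κ _ next l p hw
    have hedge k : ∃ n, Oriented (l k).1 (R n) ((l k).2 (p k)) (p (next k)) := by
      have := hw.edge k
      cases hk : (l k).1 <;> simpa [hk, Oriented] using this
    choose n hn using hedge
    obtain ⟨N, hN⟩ := (Set.finite_range n).bddAbove
    exact (h N).walk ⟨hw.mem, hw.not_isPinch,
      fun k => (hn k).mono (hmono (hN (Set.mem_range_self k)))⟩

lemma exists_perm_of_biUnique (huniq : Relator.BiUnique R)
    (htotal : ∀ e x, ∃ y, Oriented e R x y) : ∃ t : Perm X, (fun x y => t x = y) = R := by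
  choose f hf using htotal true
  choose g hg using htotal false
  refine ⟨⟨f, g, fun x => huniq.1 (hg _) (hf x), fun y => huniq.2 (hf _) (hg y)⟩, ?_⟩
  ext x y
  exact ⟨fun h => h ▸ hf x, fun h => huniq.2 (hf x) h⟩

theorem exists_perm_isPartialStable [Finite ι] [Countable X] (hG : FreeOffTuples ι G)
    (hlab : IsLabelling G a b lab) :
    ∃ t : Perm X, IsPartialStable G a b lab fun x y => t x = y := by
  let P := {R : X → X → Prop // IsPartialStable G a b lab R ∧ HasFiniteSupport G R}
  let 𝒟 (q : Bool × X) : Order.Cofinal P :=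
    { carrier := {R | ∃ y, Oriented q.1 R.1 q.2 y}
      isCofinal := fun R =>
        let ⟨R', hR', hle, hy⟩ := R.2.1.exists_extension_oriented hG hlab R.2.2 q.1 q.2
        ⟨⟨R', hR'⟩, hy, hle⟩ }
  have : Encodable (Bool × X) := Encodable.ofCountable _
  let S : ℕ → P := Order.sequenceOfCofinals
    ⟨baseRel a b, isPartialStable_baseRel hlab, hasFiniteSupport_baseRel⟩ 𝒟
  have hS : IsPartialStable G a b lab fun x y => ∃ n, (S n).1 x y :=
    .of_monotone (Order.sequenceOfCofinals.monotone _ 𝒟) fun n => (S n).2.1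
  obtain ⟨t, ht⟩ := exists_perm_of_biUnique hS.biUnique fun e x => by
    obtain ⟨y, hy⟩ := Order.sequenceOfCofinals.encode_mem _ 𝒟 (e, x)
    exact ⟨y, hy.mono fun _ _ h => ⟨_, h⟩⟩
  exact ⟨t, ht ▸ hS⟩

end Limit

end PartialStable

section Words

universe v

variable {X : Type*} {ι : Type v} {G : Subgroup (Perm X)} {a b : ι ↪ X} {lab : X → ℕ} {t : Perm X}
  {L : List (Bool × Perm X)}

/-- The value `t * g` or `t⁻¹ * g` of the letter `(true, g)` or `(false, g)`. -/
def letter {X : Type*} (t : Perm X) (l : Bool × Perm X) : Perm X :=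
  (if l.1 then t else t⁻¹) * l.2

/-- The value of a word; its last letter acts first. -/
def wordProd {X : Type*} (t : Perm X) (L : List (Bool × Perm X)) : Perm X :=
  (L.map (letter t)).prod

/-- A nonempty word with coefficients in `G` in which no two cyclically consecutive letters form a
pinch. -/
structure IsCyclicallyReduced {X ι : Type*} (G : Subgroup (Perm X)) (a b : ι ↪ X)
    (L : List (Bool × Perm X)) : Prop where
  ne_nil : L ≠ []
  mem : ∀ l ∈ L, l.2 ∈ G
  not_isPinch : ∀ {l l' M}, L ~r l :: l' :: M → ¬IsPinch G a b l l'

@[simp]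
lemma wordProd_nil : wordProd t [] = 1 :=
  rfl

lemma wordProd_cons (l : Bool × Perm X) : wordProd t (l :: L) = letter t l * wordProd t L := by
  simp [wordProd]

lemma oriented_letter (l : Bool × Perm X) (x : X) :
    Oriented l.1 (fun x y => t x = y) (l.2 x) (letter t l x) := by
  obtain ⟨_ | _, g⟩ := l <;> simp [Oriented, letter]

lemma not_isPinch_self (l : Bool × Perm X) : ¬IsPinch G a b l l :=
  fun h => Bool.self_ne_not _ h.1

lemma IsCyclicallyReduced.not_isPinch_get {l : Bool × Perm X} {M : List (Bool × Perm X)}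
    (h : IsCyclicallyReduced G a b (l :: M)) (k : Fin (M.length + 1)) :
    ¬IsPinch G a b ((l :: M).get k) ((l :: M).get (finRotate _ k)) := by
  have hrot {j : ℕ} (hj : j < ((l :: M).rotate k).length) :
      ((l :: M).rotate k)[j] = (l :: M)[(j + k) % (l :: M).length]'(Nat.mod_lt _ (by simp)) :=
    List.getElem_rotate _ _ _ hj
  have hk : (l :: M).get k = (l :: M)[(0 + k) % (l :: M).length]'(Nat.mod_lt _ (by simp)) := by
    simp only [List.get_eq_getElem, zero_add, List.length_cons, Nat.mod_eq_of_lt k.2]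
  have hk' : (l :: M).get (finRotate _ k) =
      (l :: M)[(1 + k) % (l :: M).length]'(Nat.mod_lt _ (by simp)) := by
    simp [finRotate_apply, Fin.val_add, add_comm]
  have hlen : ((l :: M).rotate k).length = M.length + 1 := by simp
  match hM : (l :: M).rotate k with
  | [] => simp [hM] at hlen
  | [x] =>
    obtain rfl : M = [] := by simpa [hM] using hlen
    have hone : finRotate [l].length k = k := Subsingleton.elim (α := Fin 1) _ _
    rw [hone]
    exact not_isPinch_self _
  | x :: y :: M' =>
    rw [hk, hk', ← hrot (by simp), ← hrot (by simp [hM])]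
    simp only [hM]
    exact h.not_isPinch (M := M') ⟨k, hM⟩

-- The index `(k, i)` stands for the image of `P i` under the suffix of the word after position `k`.
-- The walk goes down in `k` and, having read the first letter, passes from `i` to `τ i`.
lemma IsCyclicallyReduced.isReducedWalk {l : Bool × Perm X} {M : List (Bool × Perm X)}
    (h : IsCyclicallyReduced G a b (l :: M)) {κ : Type*} {P : κ → X} {τ : Perm κ}
    (hP : ∀ i, letter t l (wordProd t M (P i)) = P (τ i)) :
    IsReducedWalk G a b (fun x y => t x = y)
      (prodShear (finRotate (M.length + 1)) (Fin.lastCases τ⁻¹ fun _ => 1)).symm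
      (fun x => (l :: M).get x.1) (fun x => wordProd t (M.drop x.1) (P x.2)) where
  mem _ := h.mem _ (List.get_mem ..)
  not_isPinch x := by
    set prev := prodShear (finRotate (M.length + 1)) (Fin.lastCases τ⁻¹ fun _ => 1)
    obtain ⟨x, rfl⟩ := prev.surjective x
    rw [prev.symm_apply_apply]
    exact h.not_isPinch_get x.1
  edge x := by
    set prev := prodShear (finRotate (M.length + 1)) (Fin.lastCases τ⁻¹ fun _ => 1)
    obtain ⟨⟨k, i⟩, rfl⟩ := prev.surjective x
    rw [prev.symm_apply_apply]
    convert oriented_letter _ _ using 1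
    cases k using Fin.lastCases with
    | last => simp [prev, hP]
    | cast k =>
      have hdrop : M.drop k = M[k] :: M.drop (k + 1) := List.drop_eq_getElem_cons k.2
      suffices h : wordProd t (M.drop k) (P i) =
          letter t M[k] (wordProd t (M.drop (k + 1)) (P i)) by simpa [prev] using h
      rw [hdrop, wordProd_cons, Perm.mul_apply]

lemma mem_range_of_oriented_baseRel {e : Bool} {x y : X} (h : Oriented e (baseRel a b) x y) :
    x ∈ Set.range (bif e then a else b : ι ↪ X) ∧ y ∈ Set.range (bif e then b else a : ι ↪ X) := by
  cases e <;> obtain ⟨i, hi, hi'⟩ := h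
  exacts [⟨⟨i, hi'⟩, i, hi⟩, ⟨⟨i, hi⟩, i, hi'⟩]

lemma IsCyclicallyReduced.mem_range {l : Bool × Perm X} {M : List (Bool × Perm X)}
    (h : IsCyclicallyReduced G a b (l :: M)) (hT : IsPartialStable G a b lab fun x y => t x = y)
    {κ : Type v} [Finite κ] {P : κ → X} {τ : Perm κ}
    (hP : ∀ i, letter t l (wordProd t M (P i)) = P (τ i)) (k : Fin (M.length + 1)) (i : κ) :
    ((l :: M).get k).2 (wordProd t (M.drop k) (P i)) ∈
        Set.range (bif ((l :: M).get k).1 then a else b : ι ↪ X) ∧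
      wordProd t (M.drop k) (P i) ∈
        Set.range (bif ((l :: M).get (finRotate _ k)).1 then b else a : ι ↪ X) := by
  have hwalk := hT.walk (h.isReducedWalk hP)
  set prev := prodShear (finRotate (M.length + 1)) (Fin.lastCases τ⁻¹ fun _ => 1)
  refine ⟨(mem_range_of_oriented_baseRel (hwalk (k, i))).1, ?_⟩
  simpa [prev] using (mem_range_of_oriented_baseRel (hwalk (prev (k, i)))).2

lemma exists_perm_of_forall_mem_range [Finite ι] (P E : ι ↪ X) (h : ∀ i, P i ∈ Set.range E) :
    ∃ σ : Perm ι, ∀ i, P i = E (σ i) := by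
  choose f hf using h
  have hinj : Injective f := fun i j hij => P.injective (by rw [← hf, ← hf, hij])
  exact ⟨.ofBijective f (Finite.injective_iff_bijective.1 hinj), fun i => (hf i).symm⟩

lemma isPinch_of_forall_mem_range [Finite ι]
    (hfull : ∀ σ : Perm ι, ∃ g ∈ G, ∀ i, g (b i) = b (σ i))
    (hab : ¬∃ g ∈ G, ∀ i, g (a i) = b i) (P : ι ↪ X) {l l' : Bool × Perm X} (hl : l.2 ∈ G)
    (hne : l'.1 = true → l.1 = true)
    (hP : ∀ i, P i ∈ Set.range (bif l'.1 then b else a : ι ↪ X))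
    (hlP : ∀ i, l.2 (P i) ∈ Set.range (bif l.1 then a else b : ι ↪ X)) : IsPinch G a b l l' := by
  obtain ⟨σ, hσ⟩ := exists_perm_of_forall_mem_range P _ hP
  obtain ⟨ρ, hρ⟩ := exists_perm_of_forall_mem_range (P.trans l.2.toEmbedding) _ hlP
  have hl' i : l.2 ((bif l'.1 then b else a : ι ↪ X) i) =
      (bif l.1 then a else b : ι ↪ X) ((ρ * σ⁻¹) i) := by
    simpa [hσ] using hρ (σ⁻¹ i)
  generalize ρ * σ⁻¹ = π at hl'
  obtain ⟨e, g⟩ := l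
  obtain ⟨e', g'⟩ := l'
  match e, e' with
  | false, false =>
    obtain ⟨k, hk, hkb⟩ := hfull π⁻¹
    exact absurd ⟨k * g, G.mul_mem hk hl, fun i => by simp_all⟩ hab
  | true, true =>
    obtain ⟨k, hk, hkb⟩ := hfull π
    have hg i : g⁻¹ (a i) = b (π⁻¹ i) := Perm.inv_eq_iff_eq.2 (by simpa using (hl' (π⁻¹ i)).symm)
    refine absurd ⟨k * g⁻¹, G.mul_mem hk (G.inv_mem hl), fun i => ?_⟩ hab
    rw [Perm.mul_apply, hg, hkb, ← Perm.mul_apply, mul_inv_cancel, Perm.one_apply]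
  | true, false =>
    obtain ⟨k, hk, hkb⟩ := hfull π
    exact ⟨rfl, k, hl, hk, π, hl', hkb⟩
  | false, true => exact absurd (hne rfl) Bool.false_ne_true

-- The walk of `P` uses base edges only, so between two letters the word takes the whole family `a`
-- or `b` to the whole family `a` or `b`. All cases are excluded by `hfull`, `hab` and the absence
-- of pinches, except that of a letter `t⁻¹` after a letter `t`, which cannot occur everywhere.
theorem IsCyclicallyReduced.not_forall_wordProd_apply_eq [Finite ι]
    (h : IsCyclicallyReduced G a b L) (hT : IsPartialStable G a b lab fun x y => t x = y)
    (hfull : ∀ σ : Perm ι, ∃ g ∈ G, ∀ i, g (b i) = b (σ i))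
    (hab : ¬∃ g ∈ G, ∀ i, g (a i) = b i) (P : ι ↪ X) (τ : Perm ι) :
    ¬∀ i, wordProd t L (P i) = P (τ i) := by
  intro hP
  obtain _ | ⟨l, M⟩ := L
  · exact h.ne_nil rfl
  simp only [wordProd_cons, Perm.mul_apply] at hP
  have hsigns k : ((l :: M).get (finRotate _ k)).1 = true ∧ ((l :: M).get k).1 = false := by
    by_contra hk
    refine h.not_isPinch_get k (isPinch_of_forall_mem_range hfull hab
      (P.trans (wordProd t (M.drop k)).toEmbedding) (h.mem _ (List.get_mem ..)) ?_
      (fun i => (h.mem_range hT hP k i).2) fun i => (h.mem_range hT hP k i).1)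
    simpa using hk
  exact Bool.false_ne_true ((hsigns (finRotate _ 0)).2.symm.trans (hsigns 0).1)

theorem IsCyclicallyReduced.label_eq_zero (h : IsCyclicallyReduced G a b L)
    (hlab : IsLabelling G a b lab) (hT : IsPartialStable G a b lab fun x y => t x = y) {x : X}
    (hx : wordProd t L x = x) : lab x = 0 := by
  obtain _ | ⟨l, M⟩ := L
  · exact absurd rfl h.ne_nil
  have hP (i : PUnit) : letter t l (wordProd t M x) = x := by
    rwa [wordProd_cons, Perm.mul_apply] at hx
  have hmem := (h.mem_range hT (κ := PUnit) (P := fun _ => x) (τ := 1) hP (Fin.last _) ⟨⟩).2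
  simp only [Fin.val_last, List.drop_length, wordProd_nil, Perm.one_apply] at hmem
  obtain ⟨i, rfl⟩ := hmem
  cases ((l :: M).get (finRotate _ (Fin.last _))).1
  exacts [hlab.left i, hlab.right i]

end Words

section Adjoin

open Subgroup

variable {X ι : Type*} {G : Subgroup (Perm X)} {a b : ι ↪ X} {t w : Perm X}

lemma wordProd_append (L M : List (Bool × Perm X)) :
    wordProd t (L ++ M) = wordProd t L * wordProd t M := by
  simp [wordProd]

lemma wordProd_mem {L : List (Bool × Perm X)} (hL : ∀ l ∈ L, l.2 ∈ G) :
    wordProd t L ∈ G ⊔ zpowers t := by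
  have ht : t ∈ G ⊔ zpowers t := mem_sup_right (mem_zpowers t)
  refine list_prod_mem fun x hx => ?_
  obtain ⟨⟨e, g⟩, hl, rfl⟩ := List.mem_map.1 hx
  have hg : g ∈ G ⊔ zpowers t := mem_sup_left (hL _ hl)
  cases e
  exacts [mul_mem (inv_mem ht) hg, mul_mem ht hg]

lemma exists_eq_mul_wordProd (hw : w ∈ G ⊔ zpowers t) :
    ∃ g ∈ G, ∃ L : List (Bool × Perm X), (∀ l ∈ L, l.2 ∈ G) ∧ w = g * wordProd t L := by
  rw [zpowers_eq_closure, ← closure_eq G, ← Subgroup.closure_union] at hw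
  have hletter (e : Bool) {g : Perm X} (hg : g ∈ G) {L : List (Bool × Perm X)}
      (hL : ∀ l ∈ L, l.2 ∈ G) : ∃ g' ∈ G, ∃ L' : List (Bool × Perm X), (∀ l ∈ L', l.2 ∈ G) ∧
        (if e then t else t⁻¹) * (g * wordProd t L) = g' * wordProd t L' :=
    ⟨1, G.one_mem, (e, g) :: L, List.forall_mem_cons.2 ⟨hg, hL⟩, by
      rw [wordProd_cons, letter, one_mul, mul_assoc]⟩
  induction hw using closure_induction_left with
  | one => exact ⟨1, G.one_mem, [], by simp, by simp⟩
  | mul_left x hx y hy ih =>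
    obtain ⟨g, hg, L, hL, rfl⟩ := ih
    obtain hx | rfl := hx
    · exact ⟨x * g, G.mul_mem hx hg, L, hL, (mul_assoc ..).symm⟩
    · exact hletter true hg hL
  | inv_mul_cancel x hx y hy ih =>
    obtain ⟨g, hg, L, hL, rfl⟩ := ih
    obtain hx | rfl := hx
    · exact ⟨x⁻¹ * g, G.mul_mem (G.inv_mem hx) hg, L, hL, (mul_assoc ..).symm⟩
    · exact hletter false hg hL

lemma IsPinch.letter_mul_letter_mem {l l' : Bool × Perm X} (h : IsPinch G a b l l')
    (hl' : l'.2 ∈ G) (ht : ∀ {c d}, (c, d) ∈ stabPairs G a b → t * c = d * t) :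
    letter t l * letter t l' ∈ G := by
  obtain ⟨e, g⟩ := l
  obtain ⟨e', g'⟩ := l'
  obtain ⟨rfl, c, hc⟩ := h
  cases e'
  · suffices h : letter t (!false, g) * letter t (false, g') = c * g' from
      h ▸ G.mul_mem hc.2.1 hl'
    simp [letter, ht hc, mul_assoc]
  · suffices h : letter t (!true, g) * letter t (true, g') = c * g' from
      h ▸ G.mul_mem hc.1 hl'
    simp [letter, mul_assoc, inv_mul_eq_iff_eq_mul, ← mul_assoc t c, ht hc]

lemma exists_conj_eq_wordProd_of_isRotated {L L' : List (Bool × Perm X)} (hL : ∀ l ∈ L, l.2 ∈ G)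
    (h : L ~r L') : ∃ v ∈ G ⊔ zpowers t, v * wordProd t L * v⁻¹ = wordProd t L' := by
  obtain ⟨k, hk, rfl⟩ := List.isRotated_iff_mod.1 h
  refine ⟨(wordProd t (L.take k))⁻¹,
    inv_mem (wordProd_mem fun l hl => hL l (List.mem_of_mem_take hl)), ?_⟩
  rw [List.rotate_eq_drop_append_take hk, wordProd_append, inv_inv]
  nth_rw 2 [← List.take_append_drop k L]
  rw [wordProd_append, inv_mul_cancel_left]

lemma exists_wordProd_eq_wordProd_mul {L : List (Bool × Perm X)} (hL : ∀ l ∈ L, l.2 ∈ G)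
    (hne : L ≠ []) {g : Perm X} (hg : g ∈ G) : ∃ L' : List (Bool × Perm X),
      (∀ l ∈ L', l.2 ∈ G) ∧ L'.length = L.length ∧ wordProd t L' = wordProd t L * g := by
  obtain ⟨M, ⟨e, h⟩, rfl⟩ := (List.eq_nil_or_concat' L).resolve_left hne
  simp only [List.forall_mem_append, List.forall_mem_singleton] at hL
  refine ⟨M ++ [(e, h * g)], ?_, by simp, ?_⟩
  · simpa only [List.forall_mem_append, List.forall_mem_singleton] using ⟨hL.1, G.mul_mem hL.2 hg⟩
  · simp [wordProd_append, wordProd_cons, letter, mul_assoc]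

theorem sup_zpowers_induction {p : Perm X → Prop}
    (ht : ∀ {c d}, (c, d) ∈ stabPairs G a b → t * c = d * t)
    (conj : ∀ v ∈ G ⊔ zpowers t, ∀ w, p (v * w * v⁻¹) → p w) (mem : ∀ g ∈ G, p g)
    (reduced : ∀ L, IsCyclicallyReduced G a b L → p (wordProd t L)) :
    ∀ w ∈ G ⊔ zpowers t, p w := by
  intro w hw
  obtain ⟨g, hg, L, hL, rfl⟩ := exists_eq_mul_wordProd hw
  clear hw
  induction hn : L.length using Nat.strong_induction_on generalizing g L with
  | _ n ih =>
  subst hn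
  by_cases hne : L = []
  · simpa [hne] using mem g hg
  obtain ⟨L₁, hL₁, hlen, heq⟩ := exists_wordProd_eq_wordProd_mul (t := t) hL hne hg
  refine conj g⁻¹ (inv_mem (mem_sup_left hg)) _ ?_
  rw [inv_inv, inv_mul_cancel_left, ← heq]
  by_cases hpinch : ∃ l l' M, L₁ ~r l :: l' :: M ∧ IsPinch G a b l l'
  · obtain ⟨l, l', M, hrot, hpinch⟩ := hpinch
    have hmem : ∀ x ∈ l :: l' :: M, x.2 ∈ G := fun x hx => hL₁ x (hrot.mem_iff.2 hx)
    simp only [List.forall_mem_cons] at hmem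
    obtain ⟨v, hv, hconj⟩ := exists_conj_eq_wordProd_of_isRotated hL₁ hrot
    refine conj v hv _ ?_
    rw [hconj, wordProd_cons, wordProd_cons, ← mul_assoc]
    refine ih M.length ?_ _ (hpinch.letter_mul_letter_mem hmem.2.1 ht) M hmem.2.2 rfl
    rw [← hlen, hrot.perm.length_eq]
    simp
  · push Not at hpinch
    have hne₁ : L₁ ≠ [] := List.ne_nil_of_length_pos (hlen ▸ List.length_pos_iff.2 hne)
    exact reduced L₁ ⟨hne₁, hL₁, hpinch _ _ _⟩

end Adjoin

section Labelling

variable {X ι : Type*} {G : Subgroup (Perm X)} {a b : ι ↪ X} {x : X}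

lemma exists_infinite_fibers {Q : Type*} [Countable Q] {S : Set Q} (hS : S.Infinite) :
    ∃ f : Q → ℕ, (∀ q ∉ S, f q = 0) ∧ ∀ n, {q ∈ S | f q = n}.Infinite := by
  classical
  have := hS.to_subtype
  obtain ⟨e⟩ : Nonempty (S ≃ ℕ) := nonempty_equiv_of_countable
  refine ⟨fun q => if hq : q ∈ S then (e ⟨q, hq⟩).unpair.1 else 0, fun q hq => dif_neg hq,
    fun n => ?_⟩
  refine Set.infinite_of_injective_forall_mem (f := fun m => (e.symm (Nat.pair n m) : Q)) ?_ ?_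
  · intro m m' h
    simpa using e.symm.injective (Subtype.ext h)
  · intro m
    simp

lemma IsRegularPt.apply (h : IsRegularPt G x) {g : Perm X} (hg : g ∈ G) : IsRegularPt G (g x) := by
  intro k hk hkx
  have hconj := h (g⁻¹ * k * g) (G.mul_mem (G.mul_mem (G.inv_mem hg) hk) hg) (by simp [hkx])
  simpa [mul_assoc, inv_mul_eq_one] using hconj

/-- There are enough regular points for a generic stable letter: each finite set is avoided by some
orbit of regular points. -/
def HasManyRegularPts (G : Subgroup (Perm X)) : Prop :=
  ∀ F : Set X, F.Finite → ∃ y, IsRegularPt G y ∧ ∀ g ∈ G, g y ∉ F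

/-- The regular orbits that avoid `F`. -/
def regularOrbits (G : Subgroup (Perm X)) (F : Set X) : Set (orbitRel.Quotient G X) :=
  Quotient.mk'' '' {x | IsRegularPt G x ∧ ∀ g ∈ G, g x ∉ F}

lemma mk_mem_regularOrbits {F : Set X} :
    (Quotient.mk'' x : orbitRel.Quotient G X) ∈ regularOrbits G F ↔
      IsRegularPt G x ∧ ∀ g ∈ G, g x ∉ F := by
  refine ⟨?_, fun h => ⟨x, h, rfl⟩⟩
  rintro ⟨y, ⟨hreg, hF⟩, hyx⟩
  obtain ⟨g, rfl⟩ := orbitRel_apply.1 (Quotient.eq''.1 hyx.symm)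
  exact ⟨hreg.apply g.2, fun k hk => hF (k * g) (G.mul_mem hk g.2)⟩

lemma HasManyRegularPts.infinite_regularOrbits (h : HasManyRegularPts G) {F : Set X}
    (hF : F.Finite) : (regularOrbits G F).Infinite := by
  intro hfin
  obtain ⟨y, hreg, hy⟩ := h (F ∪ Quotient.out '' regularOrbits G F) (hF.union (hfin.image _))
  have hmem : (Quotient.mk'' y : orbitRel.Quotient G X) ∈ regularOrbits G F :=
    mk_mem_regularOrbits.2 ⟨hreg, fun g hg hgF => hy g hg (Or.inl hgF)⟩
  obtain ⟨g, hg⟩ := orbitRel_apply.1 (Quotient.mk_out (s := orbitRel G X) y)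
  exact hy g g.2 (Or.inr ⟨_, hmem, hg.symm⟩)

lemma HasManyRegularPts.exists_isLabelling [Finite ι] [Countable X] (h : HasManyRegularPts G)
    (a b : ι ↪ X) : ∃ lab : X → ℕ, IsLabelling G a b lab := by
  have : Countable (orbitRel.Quotient G X) := Quotient.countable
  obtain ⟨f, hf0, hf⟩ := exists_infinite_fibers
    (h.infinite_regularOrbits ((Set.finite_range a).union (Set.finite_range b)))
  have hzero {x : X} (hx : x ∈ Set.range a ∪ Set.range b) :
      f (Quotient.mk'' x : orbitRel.Quotient G X) = 0 :=
    hf0 _ fun hmem => (mk_mem_regularOrbits.1 hmem).2 1 G.one_mem hx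
  refine ⟨fun x => f (Quotient.mk'' x), ?_, fun i => hzero (Or.inl ⟨i, rfl⟩),
    fun i => hzero (Or.inr ⟨i, rfl⟩), fun x hx => ?_, fun n F hF => ?_⟩
  · exact fun g hg x => congrArg f (Quotient.sound' ⟨⟨g, hg⟩, rfl⟩)
  · by_contra hreg
    exact hx (hf0 _ fun hmem => hreg (mk_mem_regularOrbits.1 hmem).1)
  · obtain ⟨_, ⟨⟨y, hy, rfl⟩, hyn⟩, hyF⟩ := (hf n).exists_notMem_finite (hF.image Quotient.mk'')
    refine ⟨y, hyn, hy.1, fun g hg hgF => hyF ⟨g y, hgF, Quotient.sound' ⟨⟨g, hg⟩, rfl⟩⟩⟩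

end Labelling

section Step

open Subgroup

universe v

variable {X : Type*} {ι : Type v} {G : Subgroup (Perm X)} {a b : ι ↪ X} {lab : X → ℕ}
  {t w : Perm X}

lemma IsPartialStable.mul_eq_mul (hT : IsPartialStable G a b lab fun x y => t x = y)
    {c d : Perm X} (h : (c, d) ∈ stabPairs G a b) : t * c = d * t :=
  Equiv.ext fun _ => hT.equivariant h rfl

lemma IsPartialStable.label_apply_eq (hlab : IsLabelling G a b lab)
    (hT : IsPartialStable G a b lab fun x y => t x = y) {v : Perm X} (hv : v ∈ G ⊔ zpowers t)
    (x : X) : lab (v x) = lab x := by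
  rw [zpowers_eq_closure, ← closure_eq G, ← Subgroup.closure_union] at hv
  induction hv using closure_induction generalizing x with
  | mem v hv =>
    obtain hv | rfl := hv
    · exact hlab.map_apply v hv x
    · exact (hT.label_eq rfl).symm
  | one => rfl
  | mul v w _ _ hv hw => rw [Perm.mul_apply, hv, hw]
  | inv v _ hv => exact (hv _).symm.trans (congrArg lab (v.apply_symm_apply x))

lemma IsPartialStable.isRegularPt (hlab : IsLabelling G a b lab)
    (hT : IsPartialStable G a b lab fun x y => t x = y) {x : X} (hx : lab x ≠ 0) :
    IsRegularPt (G ⊔ zpowers t) x := by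
  suffices h : ∀ w ∈ G ⊔ zpowers t, ∀ x, lab x ≠ 0 → w x = x → w = 1 from fun w hw => h w hw x hx
  refine sup_zpowers_induction hT.mul_eq_mul ?_ ?_ ?_
  · intro v hv w h x hx hwx
    refine (conj_eq_one_iff (a := v)).1 (h (v x) ?_ (by simp [hwx]))
    rwa [hT.label_apply_eq hlab hv]
  · exact fun g hg x hx => hlab.regular x hx g hg
  · exact fun L hL x hx hLx => absurd (hL.label_eq_zero hlab hT hLx) hx

lemma HasManyRegularPts.sup_zpowers (hlab : IsLabelling G a b lab)
    (hT : IsPartialStable G a b lab fun x y => t x = y) : HasManyRegularPts (G ⊔ zpowers t) := by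
  intro F hF
  obtain ⟨n, hn⟩ := Infinite.exists_notMem_finset (insert 0 (hF.image lab).toFinset)
  simp only [Finset.mem_insert, Set.Finite.mem_toFinset, not_or] at hn
  obtain ⟨y, rfl, -⟩ := hlab.exists_fresh n ∅ Set.finite_empty
  exact ⟨y, hT.isRegularPt hlab hn.1, fun g hg hgF => hn.2 ⟨g y, hgF, hT.label_apply_eq hlab hg y⟩⟩

theorem FreeOffTuples.sup_zpowers [Finite ι] (hG : FreeOffTuples ι G)
    (hT : IsPartialStable G a b lab fun x y => t x = y)
    (hfull : ∀ σ : Perm ι, ∃ g ∈ G, ∀ i, g (b i) = b (σ i))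
    (hab : ¬∃ g ∈ G, ∀ i, g (a i) = b i) : FreeOffTuples ι (G ⊔ zpowers t) := by
  suffices h : ∀ w ∈ G ⊔ zpowers t, ∀ (P : ι ↪ X) (σ : Perm ι), (∀ i, w (P i) = P (σ i)) →
      (σ = 1 ∨ ∃ x ∉ Set.range P, w x = x) → w = 1 from
    ⟨fun w hw P hP => h w hw P 1 hP (Or.inl rfl),
      fun w hw P σ hσ x hx hwx => h w hw P σ hσ (Or.inr ⟨x, hx, hwx⟩)⟩
  refine sup_zpowers_induction hT.mul_eq_mul ?_ ?_ ?_
  · intro v _ w h P σ hσ hfix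
    refine (conj_eq_one_iff (a := v)).1 (h (P.trans v.toEmbedding) σ (by simp [hσ]) ?_)
    refine hfix.imp_right fun ⟨x, hx, hwx⟩ => ⟨v x, ?_, by simp [hwx]⟩
    simpa using hx
  · rintro g hg P σ hσ (rfl | ⟨x, hx, hgx⟩)
    exacts [hG.eq_one_of_fixes g hg P hσ, hG.eq_one_of_permutes g hg P σ hσ x hx hgx]
  · intro L hL P σ hσ
    exact absurd hσ (hL.not_forall_wordProd_apply_eq hT hfull hab P σ)

/-- The invariant of the construction: a permutation group that can be extended by stable letters
taking further families to `b`, and that induces all permutations of the family `b`. -/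
structure IsExtendable {X ι : Type*} (b : ι ↪ X) (G : Subgroup (Perm X)) : Prop where
  freeOffTuples : FreeOffTuples ι G
  full : ∀ σ : Perm ι, ∃ g ∈ G, ∀ i, g (b i) = b (σ i)
  hasManyRegularPts : HasManyRegularPts G

theorem IsExtendable.exists_stable_letter [Finite ι] [Countable X] (h : IsExtendable b G)
    (hab : ¬∃ g ∈ G, ∀ i, g (a i) = b i) :
    ∃ t : Perm X, (∀ i, t (a i) = b i) ∧ IsExtendable b (G ⊔ zpowers t) ∧
      ∀ L, IsCyclicallyReduced G a b L → wordProd t L ≠ 1 := by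
  obtain ⟨lab, hlab⟩ := h.hasManyRegularPts.exists_isLabelling a b
  obtain ⟨t, hT⟩ := exists_perm_isPartialStable h.freeOffTuples hlab
  have hfull (σ : Perm ι) : ∃ g ∈ G ⊔ zpowers t, ∀ i, g (b i) = b (σ i) :=
    (h.full σ).imp fun g hg => ⟨mem_sup_left hg.1, hg.2⟩
  have hfree := h.freeOffTuples.sup_zpowers hT h.full hab
  refine ⟨t, hT.base, ⟨hfree, hfull, .sup_zpowers hlab hT⟩, fun L hL hone => ?_⟩
  exact hL.not_forall_wordProd_apply_eq hT h.full hab b 1 fun i => by simp [hone]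

theorem IsExtendable.exists_extension [Finite ι] [Countable X] (h : IsExtendable b G)
    (a : ι ↪ X) : ∃ H, IsExtendable b H ∧ G ≤ H ∧ ∃ g ∈ H, ∀ i, g (a i) = b i := by
  by_cases hab : ∃ g ∈ G, ∀ i, g (a i) = b i
  · exact ⟨G, h, le_rfl, hab⟩
  obtain ⟨t, ht, hext, -⟩ := h.exists_stable_letter hab
  exact ⟨_, hext, le_sup_left, t, mem_sup_right (mem_zpowers t), ht⟩

end Step

section Tower

variable {X ι : Type*} {G : Subgroup (Perm X)} {b : ι ↪ X}

lemma FreeOffTuples.iSup {H : ℕ → Subgroup (Perm X)} (hmono : Monotone H)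
    (h : ∀ n, FreeOffTuples ι (H n)) : FreeOffTuples ι (⨆ n, H n) := by
  have hmem {g : Perm X} : g ∈ ⨆ n, H n ↔ ∃ n, g ∈ H n :=
    Subgroup.mem_iSup_of_directed hmono.directed_le
  refine ⟨fun g hg => ?_, fun g hg => ?_⟩ <;> obtain ⟨n, hn⟩ := hmem.1 hg
  exacts [(h n).eq_one_of_fixes g hn, (h n).eq_one_of_permutes g hn]

theorem IsExtendable.exists_transitive [Finite ι] [Countable X] (h : IsExtendable b G) :
    ∃ H, G ≤ H ∧ FreeOffTuples ι H ∧ ∀ a : ι ↪ X, ∃ g ∈ H, ∀ i, g (a i) = b i := by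
  let P := {H : Subgroup (Perm X) // IsExtendable b H}
  let 𝒟 (a : ι ↪ X) : Order.Cofinal P :=
    { carrier := {H | ∃ g ∈ H.1, ∀ i, g (a i) = b i}
      isCofinal := fun H =>
        let ⟨H', hH', hle, ha⟩ := H.2.exists_extension a
        ⟨⟨H', hH'⟩, ha, hle⟩ }
  have : Encodable (ι ↪ X) :=
    have : Countable (ι ↪ X) := DFunLike.coe_injective.countable
    Encodable.ofCountable _
  let S : ℕ → P := Order.sequenceOfCofinals ⟨G, h⟩ 𝒟
  have hmono : Monotone fun n => (S n).1 := Order.sequenceOfCofinals.monotone _ 𝒟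
  refine ⟨⨆ n, (S n).1, le_iSup (fun n => (S n).1) 0,
    .iSup hmono fun n => (S n).2.freeOffTuples, fun a => ?_⟩
  obtain ⟨g, hg, ha⟩ := Order.sequenceOfCofinals.encode_mem ⟨G, h⟩ 𝒟 a
  exact ⟨g, Subgroup.mem_iSup_of_mem _ hg, ha⟩

end Tower

section Base

/-- The space acted on by the initial group `Perm (Fin 3)`: the natural action together with
infinitely many copies of the regular one. -/
abbrev BaseSpace : Type :=
  Fin 3 ⊕ Σ _ : ℕ, Perm (Fin 3)

/-- The initial group of the construction. -/
abbrev baseGroup : Subgroup (Perm BaseSpace) :=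
  (toPermHom (Perm (Fin 3)) BaseSpace).range

lemma isRegularPt_inr (n : ℕ) (p : Perm (Fin 3)) :
    IsRegularPt baseGroup (.inr ⟨n, p⟩ : BaseSpace) := by
  rintro _ ⟨k, rfl⟩ hk
  have hk' : (⟨n, k * p⟩ : Σ _ : ℕ, Perm (Fin 3)) = ⟨n, p⟩ := Sum.inr.inj hk
  obtain rfl : k = 1 := by simpa using hk'
  exact map_one _

lemma eq_one_of_mem_baseGroup {g : Perm BaseSpace} (hg : g ∈ baseGroup) {x y : BaseSpace}
    (hxy : x ≠ y) (hx : g x = x) (hy : g y = y) : g = 1 := by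
  match x, y with
  | .inr ⟨n, p⟩, _ => exact isRegularPt_inr n p g hg hx
  | _, .inr ⟨n, p⟩ => exact isRegularPt_inr n p g hg hy
  | .inl i, .inl j =>
    obtain ⟨k, rfl⟩ := hg
    have hfix : ∀ (k : Perm (Fin 3)) (i j : Fin 3), i ≠ j → k i = i → k j = j → k = 1 := by decide
    rw [hfix k i j (fun h => hxy (congrArg _ h)) (Sum.inl.inj hx) (Sum.inl.inj hy), map_one]

lemma freeOffTuples_baseGroup : FreeOffTuples (Fin 3) baseGroup where
  eq_one_of_fixes g hg a ha :=
    eq_one_of_mem_baseGroup hg (a.injective.ne zero_ne_one) (ha 0) (ha 1)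
  eq_one_of_permutes := by
    rintro g hg a σ hσ (j | ⟨n, p⟩) hx hgx
    · have hgg : g * g = 1 := by
        obtain ⟨k, rfl⟩ := hg
        have hsq : ∀ (k : Perm (Fin 3)) (j : Fin 3), k j = j → k * k = 1 := by decide
        rw [← map_mul, hsq k j (Sum.inl.inj hgx), map_one]
      have hσσ : σ * σ = 1 := Equiv.ext fun i => a.injective <| by
        rw [Perm.mul_apply, ← hσ, ← hσ, ← Perm.mul_apply, hgg, Perm.one_apply, Perm.one_apply]
      have hfix : ∀ σ : Perm (Fin 3), σ * σ = 1 → ∃ i, σ i = i := by decide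
      obtain ⟨i, hi⟩ := hfix σ hσσ
      exact eq_one_of_mem_baseGroup hg (fun h => hx ⟨i, h.symm⟩) hgx (by rw [hσ, hi])
    · exact isRegularPt_inr n p g hg hgx

lemma isExtendable_baseGroup :
    IsExtendable (Embedding.inl : Fin 3 ↪ BaseSpace) baseGroup where
  freeOffTuples := freeOffTuples_baseGroup
  full σ := ⟨_, ⟨σ, rfl⟩, fun _ => rfl⟩
  hasManyRegularPts F hF := by
    obtain ⟨n, hn⟩ := Infinite.exists_notMem_finset
      (hF.image (Sum.elim (fun _ => 0) Sigma.fst : BaseSpace → ℕ)).toFinset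
    refine ⟨.inr ⟨n, 1⟩, isRegularPt_inr n 1, ?_⟩
    rintro _ ⟨k, rfl⟩ hF
    exact hn ((Set.Finite.mem_toFinset _).2 ⟨_, hF, rfl⟩)

lemma isCyclicallyReduced_of_forall_ne_one {X ι : Type*} {G : Subgroup (Perm X)} {a b : ι ↪ X}
    {L : List (Bool × Perm X)} (hG : FreeOffTuples ι G)
    (ha : ∀ {c d}, (c, d) ∈ stabPairs G a b → c = 1) (hne : L ≠ [])
    (hL : ∀ l ∈ L, l.2 ∈ G ∧ l.2 ≠ 1) : IsCyclicallyReduced G a b L where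
  ne_nil := hne
  mem l hl := (hL l hl).1
  not_isPinch := by
    rintro l ⟨_ | _, g'⟩ M hrot ⟨-, c, hc⟩
    · exact (hL l (hrot.mem_iff.2 (by simp))).2 (ha hc)
    · obtain rfl := ha hc
      exact (hL l (hrot.mem_iff.2 (by simp))).2 (hG.snd_eq_one hc)

lemma eq_one_of_mem_stabPairs_baseGroup {a b : Fin 3 ↪ BaseSpace} (ha0 : a 0 = .inr ⟨0, 1⟩)
    (ha1 : a 1 = .inr ⟨1, 1⟩) (ha2 : a 2 = .inl 2) {c d : Perm BaseSpace}
    (h : (c, d) ∈ stabPairs baseGroup a b) : c = 1 := by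
  obtain ⟨⟨k, rfl⟩, -, σ, hσ, -⟩ := h
  have hk := hσ 0
  generalize σ 0 = j at hk
  obtain rfl : k = 1 := by fin_cases j <;> simp_all
  exact map_one _

lemma exists_base_stable_letter :
    ∃ t : Perm BaseSpace, t (.inl 2) = .inl 2 ∧
      IsExtendable (Embedding.inl : Fin 3 ↪ BaseSpace) (baseGroup ⊔ Subgroup.zpowers t) ∧
      ∀ s ∈ baseGroup, s ≠ 1 → t⁻¹ * s * t * s * (t⁻¹ * s * t * s) ≠ 1 := by
  obtain ⟨a, ha0, ha1, ha2⟩ : ∃ a : Fin 3 ↪ BaseSpace,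
      a 0 = .inr ⟨0, 1⟩ ∧ a 1 = .inr ⟨1, 1⟩ ∧ a 2 = .inl 2 :=
    exists_embedding_fin_three (by simp) (by simp) (by simp)
  have hab : ¬∃ g ∈ baseGroup, ∀ i, g (a i) = Embedding.inl i := by
    rintro ⟨_, ⟨k, rfl⟩, h⟩
    simpa [ha0] using h 0
  obtain ⟨t, ht, hext, hred⟩ := isExtendable_baseGroup.exists_stable_letter hab
  refine ⟨t, (congrArg t ha2.symm).trans (ht 2), hext, fun s hs hs1 => ?_⟩
  have hword := hred [(false, s), (true, s), (false, s), (true, s)] <|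
    isCyclicallyReduced_of_forall_ne_one freeOffTuples_baseGroup
      (eq_one_of_mem_stabPairs_baseGroup ha0 ha1 ha2) (by simp) (by simp_all)
  simpa [wordProd, letter, mul_assoc] using hword

theorem exists_isExtendable_involutions :
    ∃ H : Subgroup (Perm BaseSpace), IsExtendable (Embedding.inl : Fin 3 ↪ BaseSpace) H ∧
      ∃ s ∈ H, ∃ s' ∈ H, s * s = 1 ∧ s' * s' = 1 ∧ s (.inl 2) = .inl 2 ∧ s' (.inl 2) = .inl 2 ∧
        s * s' ≠ s' * s := by
  obtain ⟨t, ht, hext, hword⟩ := exists_base_stable_letter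
  let s := toPermHom (Perm (Fin 3)) BaseSpace (swap 0 1)
  have hs : s ∈ baseGroup := ⟨_, rfl⟩
  have hss : s * s = 1 := by rw [← map_mul, swap_mul_self, map_one]
  have hs1 : s ≠ 1 := fun h => by simpa [s] using congr($h (.inl 0))
  have hs2 : s (.inl 2) = .inl 2 := rfl
  have hsH : s ∈ baseGroup ⊔ Subgroup.zpowers t := Subgroup.mem_sup_left hs
  have htH : t ∈ baseGroup ⊔ Subgroup.zpowers t := Subgroup.mem_sup_right (Subgroup.mem_zpowers t)
  have hss' : t⁻¹ * s * t * (t⁻¹ * s * t) = 1 := by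
    simp only [mul_assoc, mul_inv_cancel_left]
    rw [← mul_assoc s s, hss, one_mul, inv_mul_cancel]
  refine ⟨_, hext, s, hsH, t⁻¹ * s * t, mul_mem (mul_mem (inv_mem htH) hsH) htH, hss, hss', hs2, ?_,
    fun hcomm => hword s hs hs1 ?_⟩
  · rw [Perm.mul_apply, Perm.mul_apply, ht, hs2, Perm.inv_eq_iff_eq, ht]
  · rw [mul_assoc (t⁻¹ * s * t), ← mul_assoc s, hcomm, mul_assoc _ s s, hss, mul_one, hss']

end Base

section Main

variable {X : Type*} {H : Subgroup (Perm X)}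

lemma isMultiplyPretransitive_of_forall_exists {n : ℕ} {b : Fin n ↪ X}
    (h : ∀ a : Fin n ↪ X, ∃ g ∈ H, ∀ i, g (a i) = b i) : IsMultiplyPretransitive H X n := by
  refine (isPretransitive_iff_base b).2 fun a => ?_
  obtain ⟨g, hg, ha⟩ := h a
  exact ⟨⟨g, hg⟩⁻¹, inv_smul_eq_iff.2 (DFunLike.ext _ _ fun i => (ha i).symm)⟩

lemma isPretransitive_of_isMultiplyPretransitive {G X : Type*} [Group G] [MulAction G X]
    [Infinite X] {n : ℕ} [IsMultiplyPretransitive G X n] (hn : 1 ≤ n) : IsPretransitive G X :=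
  have := isMultiplyPretransitive_of_le' (G := G) (α := X) hn (by simp)
  is_one_pretransitive_iff.1 this

end Main

theorem exists_sharply_three_transitive_no_abelian_normal_in_stabilizers :
    Nonempty SharplyThreeTransitiveNoAbelianWitness := by
  obtain ⟨G, hG, s, hs, s', hs', hss, hss', hfix, hfix', hne⟩ := exists_isExtendable_involutions
  obtain ⟨H, hGH, hfree, htrans⟩ := hG.exists_transitive
  have : IsMultiplyPretransitive H BaseSpace 3 := isMultiplyPretransitive_of_forall_exists htrans
  have : IsPretransitive H BaseSpace :=
    isPretransitive_of_isMultiplyPretransitive (n := 3) (by simp)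
  have hsharp : SharplyThreeTransitive H BaseSpace :=
    sharplyThreeTransitive_of_isMultiplyPretransitive fun g a ha =>
      Subtype.ext (hfree.eq_one_of_fixes g g.2 a ha)
  have hinv (g : H) (hg : g * g = 1) (x y : BaseSpace) (hxy : x ≠ y) (hx : g • x = x)
      (hy : g • y = y) : g = 1 :=
    Subtype.ext (hfree.eq_one_of_mul_self_eq_one g.2 (congrArg Subtype.val hg) hxy hx hy)
  have hstab (x : BaseSpace) : HasNoAbelianNormal (stabilizer H x) :=
    hasNoAbelianNormal_stabilizer hinv (s := ⟨s, hGH hs⟩) (s' := ⟨s', hGH hs'⟩) hfix hfix'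
      (Subtype.ext hss) (Subtype.ext hss') (fun h => hne (congrArg Subtype.val h)) x
  exact ⟨{
    G := ULift H
    X := ULift BaseSpace
    infinite := inferInstance
    sharply3transitive := hsharp.ulift
    stabilizer_no_abelian_normal := fun x => (hstab x.down).congr (stabilizerULiftEquiv x) }⟩
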